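/- arXiv:0910.0902 — 7 statements merged into one kernel-verified Lean document; each statement's English description precedes it below -/
import Mathlib

section
/- Let T ∈ ℝ^{m×m} be a matrix factored as T = R S with R ∈ ℝ^{m×k} and S ∈ ℝ^{k×m}, let O ∈ ℝ^{n×m} and π ∈ ℝ^m with π = R π_l for some π_l ∈ ℝ^k. Then for any sequence of observation indices x_1,…,x_t ∈ {1,…,n}, 1_m^T A_{x_t} A_{x_{t-1}} ⋯ A_{x_1} π = 1_m^T R W_{x_t} W_{x_{t-1}} ⋯ W_{x_1} π_l, where A_x = R S diag(O_{x,1},…,O_{x,m}) ∈ ℝ^{m×m} and W_x = S diag(O_{x,1},…,O_{x,m}) R ∈ ℝ^{k×k} and 1_m is the all-ones vector in ℝ^m. -/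
open Matrix

/-- With `T = R S`, `π = R πₗ`, `A_x = R S diag(O_{x,·})` and
`W_x = S diag(O_{x,·}) R`, the joint observation probability computed with the `m × m`
operators `A_x` can equivalently be computed with the `k × k` operators `W_x`:
`1ₘᵀ A_{x_t} ⋯ A_{x_1} π = 1ₘᵀ R W_{x_t} ⋯ W_{x_1} πₗ`. -/
theorem rrhmm_joint_prob_low_dim {m k n : ℕ}
    (R : Matrix (Fin m) (Fin k) ℝ) (S : Matrix (Fin k) (Fin m) ℝ)
    (O : Matrix (Fin n) (Fin m) ℝ)
    (π : Fin m → ℝ) (πl : Fin k → ℝ) (hπ : π = R *ᵥ πl)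
    (A : Fin n → Matrix (Fin m) (Fin m) ℝ)
    (hA : ∀ x, A x = R * S * Matrix.diagonal (fun i => O x i))
    (W : Fin n → Matrix (Fin k) (Fin k) ℝ)
    (hW : ∀ x, W x = S * Matrix.diagonal (fun i => O x i) * R)
    (xs : List (Fin n)) :
    (fun _ => (1 : ℝ)) ⬝ᵥ ((xs.map A).prod *ᵥ π)
      = (fun _ => (1 : ℝ)) ⬝ᵥ ((R * (xs.map W).prod) *ᵥ πl) := by
  -- `R` intertwines the two families, `A x * R = R * W x`, hence also their products.
  have key : (xs.map A).prod * R = R * (xs.map W).prod := by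
    induction xs with
    | nil => simp
    | cons x xs ih =>
      rw [List.map_cons, List.map_cons, List.prod_cons, List.prod_cons, Matrix.mul_assoc, ih,
        hA, hW]
      simp only [Matrix.mul_assoc]
  rw [hπ, Matrix.mulVec_mulVec, key]
end

section
/- Let T = R S ∈ ℝ^{m×m} with R ∈ ℝ^{m×k}, S ∈ ℝ^{k×m} both of rank k, let O ∈ ℝ^{n×m} have rank at least k, let π ∈ ℝ^m be entrywise positive, assume S diag(π) O^T has full row rank k and rank(O R) = k, and set P21 = O T diag(π) O^T. If U ∈ ℝ^{n×k} is a matrix whose columns are orthonormal left singular vectors of P21 corresponding to its nonzero singular values, then the column space of U equals the column space of O R, and consequently the k×k matrix U^T O R is invertible. -/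
/-!
Right-multiplying `P21 = U diag(σ) Vᵀ` by `V diag(σ)⁻¹` gives `U = (O R) X` with `X` of size
`k × k`. Since `Uᵀ U = 1`, the square matrices `Uᵀ O R` and `X` are inverse to each other, so
`O R = U (Uᵀ O R)` as well. The two factorizations give the two inclusions of column spaces.
-/

open Matrix

/-- In the rank-`k` RR-HMM setting, if `U ∈ ℝ^{n×k}` is a matrix of
orthonormal left singular vectors of `P21 = O T diag(π) Oᵀ` corresponding to its nonzero
singular values (i.e. `P21 = U diag(σ) Vᵀ` with `σ > 0` and `U, V` having orthonormal
columns), then the column space of `U` equals the column space of `O R`, and `Uᵀ O R`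
is invertible. -/
theorem range_U_eq_range_OR {m k n : ℕ}
    (R : Matrix (Fin m) (Fin k) ℝ) (S : Matrix (Fin k) (Fin m) ℝ)
    (O : Matrix (Fin n) (Fin m) ℝ) (π : Fin m → ℝ)
    (hR : R.rank = k) (hS : S.rank = k) (hO : k ≤ O.rank)
    (hπ : ∀ i, 0 < π i)
    (hM : (S * Matrix.diagonal π * Oᵀ).rank = k)
    (hOR : (O * R).rank = k)
    (U V : Matrix (Fin n) (Fin k) ℝ) (σ : Fin k → ℝ)
    (hUorth : Uᵀ * U = 1) (hVorth : Vᵀ * V = 1)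
    (hσ : ∀ i, 0 < σ i)
    (hSVD : O * (R * S) * Matrix.diagonal π * Oᵀ = U * Matrix.diagonal σ * Vᵀ) :
    LinearMap.range U.mulVecLin = LinearMap.range (O * R).mulVecLin
      ∧ IsUnit (Uᵀ * (O * R)) := by
  -- Solving the SVD identity for `U` exhibits it as `(O * R) * X` with `X` square.
  obtain ⟨X, hX⟩ : ∃ X : Matrix (Fin k) (Fin k) ℝ, U = O * R * X := by
    refine ⟨S * diagonal π * Oᵀ * V * diagonal (fun i => (σ i)⁻¹), ?_⟩
    have hd : diagonal σ * diagonal (fun i => (σ i)⁻¹) = 1 := by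
      rw [diagonal_mul_diagonal, ← diagonal_one]
      congr 1
      funext i
      exact mul_inv_cancel₀ (hσ i).ne'
    calc U = U * diagonal σ * (Vᵀ * V) * diagonal (fun i => (σ i)⁻¹) := by
            rw [hVorth, Matrix.mul_one, Matrix.mul_assoc, hd, Matrix.mul_one]
      _ = (U * diagonal σ * Vᵀ) * V * diagonal (fun i => (σ i)⁻¹) := by
            simp only [Matrix.mul_assoc]
      _ = _ := by
            rw [← hSVD]
            simp only [Matrix.mul_assoc]
  -- Hence `X` and `Uᵀ * (O * R)` are mutually inverse, being square with product `Uᵀ * U = 1`.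
  have h1 : Uᵀ * (O * R) * X = 1 := by
    rw [Matrix.mul_assoc, ← hX, hUorth]
  have h2 : X * (Uᵀ * (O * R)) = 1 := mul_eq_one_comm.mp h1
  have hY : O * R = U * (Uᵀ * (O * R)) := by
    calc O * R = O * R * (X * (Uᵀ * (O * R))) := by rw [h2, Matrix.mul_one]
      _ = O * R * X * (Uᵀ * (O * R)) := by rw [← Matrix.mul_assoc (O * R)]
      _ = U * (Uᵀ * (O * R)) := by rw [← hX]
  refine ⟨le_antisymm ?_ ?_, IsUnit.of_mul_eq_one X h1⟩
  · rw [hX, Matrix.mulVecLin_mul]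
    exact LinearMap.range_comp_le_range _ _
  · rw [hY, Matrix.mulVecLin_mul]
    exact LinearMap.range_comp_le_range _ _
end

section
/- Let T = R S ∈ ℝ^{m×m} with R ∈ ℝ^{m×k}, S ∈ ℝ^{k×m}, T column-stochastic (columns sum to 1, entries nonnegative), O ∈ ℝ^{n×m}, π ∈ ℝ^m entrywise positive with M := S diag(π) O^T of full row rank k. Let U ∈ ℝ^{n×k} be such that U^T O R is invertible, and define P1 = O π, P21 = O T diag(π) O^T, and b_∞ = ((P21)^T U)^+ P1, where for the full-column-rank matrix (P21)^T U the pseudoinverse is (((P21)^T U)^T (P21)^T U)^{-1} ((P21)^T U)^T. Then b_∞^T = 1_m^T R (U^T O R)^{-1}. -/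
open Matrix

/-!
Write `A = Uᵀ O R`, `M = S diag(π) Oᵀ` and `c = 1ᵀ R A⁻¹`. Then `Kᵀ = A M`, so
`cᵀ Kᵀ = 1ᵀ R M = (1ᵀ R S) diag(π) Oᵀ = πᵀ Oᵀ`, the last step because the columns of `R S` sum
to one. Hence `P1 = K c`, and since `K` has full column rank, its left inverse `(Kᵀ K)⁻¹ Kᵀ`
recovers `c` from `P1`.
-/

/-- A real matrix of full column rank has `(Kᵀ K)⁻¹ Kᵀ` as a left inverse. -/
lemma leftInverse_of_rank_eq {n k : ℕ} (K : Matrix (Fin n) (Fin k) ℝ) (hK : K.rank = k) :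
    (Kᵀ * K)⁻¹ * Kᵀ * K = 1 := by
  have hrank : (Kᵀ * K).rank = Fintype.card (Fin k) := by
    rw [Matrix.rank_transpose_mul_self, hK, Fintype.card_fin]
  have hunit : IsUnit (Kᵀ * K) := by
    rw [← Matrix.linearIndependent_cols_iff_isUnit, linearIndependent_iff_card_eq_finrank_span,
      ← hrank, Matrix.rank_eq_finrank_span_cols]
    rfl
  rw [Matrix.mul_assoc]
  exact Matrix.nonsing_inv_mul _ ((Matrix.isUnit_iff_isUnit_det _).1 hunit)

/-- With `T = R S` column-stochastic, `π` entrywise positive,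
`M = S diag(π) Oᵀ` of full row rank `k`, and `U` such that `Uᵀ O R` is invertible,
the normalization vector `b_∞ = ((P21)ᵀ U)⁺ P1` of the observable representation
(with the pseudoinverse of the full-column-rank matrix `K = (P21)ᵀ U` given by
`(Kᵀ K)⁻¹ Kᵀ`) satisfies `b_∞ᵀ = 1ₘᵀ R (Uᵀ O R)⁻¹`. -/
theorem binf_eq {m k n : ℕ}
    (R : Matrix (Fin m) (Fin k) ℝ) (S : Matrix (Fin k) (Fin m) ℝ)
    (O : Matrix (Fin n) (Fin m) ℝ) (π : Fin m → ℝ)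
    (hTnn : ∀ i j, 0 ≤ (R * S) i j) (hTcol : ∀ j, ∑ i, (R * S) i j = 1)
    (hπ : ∀ i, 0 < π i)
    (hM : (S * Matrix.diagonal π * Oᵀ).rank = k)
    (U : Matrix (Fin n) (Fin k) ℝ)
    (hU : IsUnit (Uᵀ * O * R))
    (hK : ((O * (R * S) * Matrix.diagonal π * Oᵀ)ᵀ * U).rank = k) :
    let P1 : Fin n → ℝ := O *ᵥ π
    let P21 : Matrix (Fin n) (Fin n) ℝ := O * (R * S) * Matrix.diagonal π * Oᵀ
    let K : Matrix (Fin n) (Fin k) ℝ := P21ᵀ * U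
    let binf : Fin k → ℝ := ((Kᵀ * K)⁻¹ * Kᵀ) *ᵥ P1
    binf = (fun _ => (1 : ℝ)) ᵥ* (R * (Uᵀ * O * R)⁻¹) := by
  intro P1 P21 K binf
  have hKT : Kᵀ = (Uᵀ * O * R) * (S * Matrix.diagonal π * Oᵀ) := by
    simp only [K, P21, Matrix.transpose_mul, Matrix.transpose_transpose, Matrix.mul_assoc]
  have hdet : IsUnit (Uᵀ * O * R).det := (Matrix.isUnit_iff_isUnit_det _).1 hU
  have hone : (fun _ => (1 : ℝ)) ᵥ* (R * S) = fun _ => 1 := by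
    ext j
    simpa [Matrix.vecMul, dotProduct] using hTcol j
  have hdiag : (fun _ => (1 : ℝ)) ᵥ* Matrix.diagonal π = π := by
    ext j
    simp [Matrix.vecMul_diagonal]
  have hP1 : P1 = K *ᵥ ((fun _ => (1 : ℝ)) ᵥ* (R * (Uᵀ * O * R)⁻¹)) := by
    have hRM : R * (Uᵀ * O * R)⁻¹ * Kᵀ = R * S * (Matrix.diagonal π * Oᵀ) := by
      rw [hKT, Matrix.mul_assoc R, Matrix.nonsing_inv_mul_cancel_left _ _ hdet]
      simp only [Matrix.mul_assoc]
    rw [← Matrix.vecMul_transpose K, Matrix.vecMul_vecMul, hRM, ← Matrix.vecMul_vecMul, hone,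
      ← Matrix.vecMul_vecMul, hdiag, Matrix.vecMul_transpose]
  change ((Kᵀ * K)⁻¹ * Kᵀ) *ᵥ P1 = _
  rw [hP1, Matrix.mulVec_mulVec, leftInverse_of_rank_eq K hK, Matrix.one_mulVec]
end

section
/- Let T = R S ∈ ℝ^{m×m} with R ∈ ℝ^{m×k}, S ∈ ℝ^{k×m}, O ∈ ℝ^{n×m}, π ∈ ℝ^m entrywise positive, and assume S diag(π) O^T has full row rank k. Let U ∈ ℝ^{n×k} be such that U^T O R is invertible. For each x ∈ {1,…,n} define A_x = R S diag(O_{x,·}), W_x = S diag(O_{x,·}) R, P21 = O T diag(π) O^T, P3x1 = O A_x T diag(π) O^T, and B_x = (U^T P3x1)(U^T P21)^+, where the pseudoinverse of the full-row-rank matrix U^T P21 is (U^T P21)^T (U^T P21 (U^T P21)^T)^{-1}. Then B_x = (U^T O R) W_x (U^T O R)^{-1}. -/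
open Matrix

/-! Write `G = Uᵀ O R` and `M = S diag(π) Oᵀ`. Associativity gives `Uᵀ P21 = G M` and
`Uᵀ P3x1 = G W M = (G W G⁻¹) (G M)`. Since `G` is invertible and `M` has rank `k`, the matrix
`G M` has full row rank, so its Gram matrix is invertible and the right inverse
`(G M)ᵀ ((G M) (G M)ᵀ)⁻¹` cancels `G M`. -/

/-- The Gram matrix `N Nᵀ` of a real matrix of full row rank is invertible, because it has
the same rank as `N`. -/
lemma isUnit_det_mul_transpose_of_rank {k n : ℕ} (N : Matrix (Fin k) (Fin n) ℝ)
    (hN : N.rank = k) : IsUnit (N * Nᵀ).det := by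
  have hrank : (N * Nᵀ).rank = k := by rw [Matrix.rank_self_mul_transpose, hN]
  rw [← Matrix.isUnit_iff_isUnit_det, ← Matrix.mulVec_surjective_iff_isUnit]
  have htop : LinearMap.range (N * Nᵀ).mulVecLin = ⊤ := by
    apply Submodule.eq_top_of_finrank_eq
    rw [Module.finrank_fin_fun]
    exact hrank
  exact LinearMap.range_eq_top.mp htop

/-- With `T = R S`, `π` entrywise positive, `M = S diag(π) Oᵀ` of full
row rank `k` and `U` such that `Uᵀ O R` is invertible, the observable operator
`B_x = (Uᵀ P3x1)(Uᵀ P21)⁺` (with the pseudoinverse of the full-row-rank matrix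
`M' = Uᵀ P21` given by `M'ᵀ (M' M'ᵀ)⁻¹`) satisfies
`B_x = (Uᵀ O R) W_x (Uᵀ O R)⁻¹`. -/
theorem Bx_similar_Wx {m k n : ℕ}
    (R : Matrix (Fin m) (Fin k) ℝ) (S : Matrix (Fin k) (Fin m) ℝ)
    (O : Matrix (Fin n) (Fin m) ℝ) (π : Fin m → ℝ)
    (hπ : ∀ i, 0 < π i)
    (hM : (S * Matrix.diagonal π * Oᵀ).rank = k)
    (U : Matrix (Fin n) (Fin k) ℝ)
    (hU : IsUnit (Uᵀ * O * R))
    (x : Fin n) :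
    let A : Matrix (Fin m) (Fin m) ℝ := R * S * Matrix.diagonal (fun i => O x i)
    let W : Matrix (Fin k) (Fin k) ℝ := S * Matrix.diagonal (fun i => O x i) * R
    let P21 : Matrix (Fin n) (Fin n) ℝ := O * (R * S) * Matrix.diagonal π * Oᵀ
    let P3x1 : Matrix (Fin n) (Fin n) ℝ := O * A * (R * S) * Matrix.diagonal π * Oᵀ
    let M' : Matrix (Fin k) (Fin n) ℝ := Uᵀ * P21
    (Uᵀ * P3x1) * (M'ᵀ * (M' * M'ᵀ)⁻¹) = (Uᵀ * O * R) * W * (Uᵀ * O * R)⁻¹ := by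
  intro A W P21 P3x1 M'
  have hdet : IsUnit (Uᵀ * O * R).det := (Matrix.isUnit_iff_isUnit_det _).mp hU
  have hM' : M' = (Uᵀ * O * R) * (S * Matrix.diagonal π * Oᵀ) := by
    simp only [M', P21, Matrix.mul_assoc]
  have hrank : M'.rank = k := by
    rw [hM', Matrix.rank_mul_eq_right_of_isUnit_det _ _ hdet, hM]
  have hgram : IsUnit (M' * M'ᵀ).det := isUnit_det_mul_transpose_of_rank M' hrank
  have hP : Uᵀ * P3x1 = (Uᵀ * O * R) * W * (Uᵀ * O * R)⁻¹ * M' := by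
    rw [hM', Matrix.mul_assoc (_ * W), Matrix.nonsing_inv_mul_cancel_left _ _ hdet]
    simp only [P3x1, A, W, Matrix.mul_assoc]
  rw [hP, Matrix.mul_assoc _ M', ← Matrix.mul_assoc M', Matrix.mul_nonsing_inv _ hgram,
    Matrix.mul_one]
end

section
/- Let T = R S ∈ ℝ^{m×m} with R ∈ ℝ^{m×k}, S ∈ ℝ^{k×m}, O ∈ ℝ^{n×m}, π = R π_l ∈ ℝ^m, and let U ∈ ℝ^{n×k} be such that U^T O R is invertible. Define b_1 = (U^T O R) π_l, b_∞^T = 1_m^T R (U^T O R)^{-1}, and B_x = (U^T O R) W_x (U^T O R)^{-1} with W_x = S diag(O_{x,·}) R. Then for every sequence x_1,…,x_t ∈ {1,…,n}, b_∞^T B_{x_t} ⋯ B_{x_1} b_1 = 1_m^T A_{x_t} ⋯ A_{x_1} π, where A_x = R S diag(O_{x,·}). -/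
/-!
With `P = Uᵀ O R`, the matrix `R P⁻¹` intertwines the two families of operators:
`(R P⁻¹) B_x = R W_x P⁻¹ = A_x (R P⁻¹)`. It therefore intertwines their products along any
observation sequence, and `(R P⁻¹) b₁ = R πₗ = π`.
-/

open Matrix

theorem intertwine_list_prod {ι p q : Type*} [Fintype p] [DecidableEq p] [Fintype q]
    [DecidableEq q] (C : Matrix p q ℝ) (A : ι → Matrix p p ℝ) (B : ι → Matrix q q ℝ)
    (h : ∀ x, C * B x = A x * C) (xs : List ι) :
    C * (xs.map B).prod = (xs.map A).prod * C := by
  induction xs with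
  | nil => simp
  | cons x xs ih =>
    rw [List.map_cons, List.map_cons, List.prod_cons, List.prod_cons, ← Matrix.mul_assoc, h,
      Matrix.mul_assoc, ih, Matrix.mul_assoc]

/-- With `T = R S`, `π = R πₗ`, and `U` such that `Uᵀ O R` is invertible,
the observable representation `b₁ = (Uᵀ O R) πₗ`, `b_∞ᵀ = 1ₘᵀ R (Uᵀ O R)⁻¹`,
`B_x = (Uᵀ O R) W_x (Uᵀ O R)⁻¹` computes joint probabilities:
`b_∞ᵀ B_{x_t} ⋯ B_{x_1} b₁ = 1ₘᵀ A_{x_t} ⋯ A_{x_1} π`. -/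
theorem observable_rep_joint_prob {m k n : ℕ}
    (R : Matrix (Fin m) (Fin k) ℝ) (S : Matrix (Fin k) (Fin m) ℝ)
    (O : Matrix (Fin n) (Fin m) ℝ)
    (π : Fin m → ℝ) (πl : Fin k → ℝ) (hπ : π = R *ᵥ πl)
    (U : Matrix (Fin n) (Fin k) ℝ)
    (hU : IsUnit (Uᵀ * O * R))
    (xs : List (Fin n)) :
    let A : Fin n → Matrix (Fin m) (Fin m) ℝ :=
      fun x => R * S * Matrix.diagonal (fun i => O x i)
    let W : Fin n → Matrix (Fin k) (Fin k) ℝ :=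
      fun x => S * Matrix.diagonal (fun i => O x i) * R
    let B : Fin n → Matrix (Fin k) (Fin k) ℝ :=
      fun x => (Uᵀ * O * R) * W x * (Uᵀ * O * R)⁻¹
    let b1 : Fin k → ℝ := (Uᵀ * O * R) *ᵥ πl
    let binf : Fin k → ℝ := (fun _ => (1 : ℝ)) ᵥ* (R * (Uᵀ * O * R)⁻¹)
    binf ⬝ᵥ ((xs.map B).prod *ᵥ b1) = (fun _ => (1 : ℝ)) ⬝ᵥ ((xs.map A).prod *ᵥ π) := by
  intro A W B b1 binf
  have hinv : (Uᵀ * O * R)⁻¹ * (Uᵀ * O * R) = 1 :=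
    Matrix.nonsing_inv_mul _ ((Matrix.isUnit_iff_isUnit_det _).mp hU)
  have hAB : ∀ x, R * (Uᵀ * O * R)⁻¹ * B x = A x * (R * (Uᵀ * O * R)⁻¹) := by
    intro x
    simp only [A, B, W]
    generalize Uᵀ * O * R = P at hinv
    calc R * P⁻¹ * (P * (S * Matrix.diagonal (fun i => O x i) * R) * P⁻¹)
        = R * (P⁻¹ * P) * (S * Matrix.diagonal (fun i => O x i) * R) * P⁻¹ := by
          simp only [Matrix.mul_assoc]
      _ = R * S * Matrix.diagonal (fun i => O x i) * (R * P⁻¹) := by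
          rw [hinv, Matrix.mul_one]
          simp only [Matrix.mul_assoc]
  have hb : (R * (Uᵀ * O * R)⁻¹) *ᵥ b1 = π := by
    simp only [b1]
    rw [Matrix.mulVec_mulVec, Matrix.mul_assoc R, hinv, Matrix.mul_one, hπ]
  simp only [binf]
  rw [← Matrix.dotProduct_mulVec, Matrix.mulVec_mulVec, intertwine_list_prod _ A B hAB,
    ← Matrix.mulVec_mulVec, hb]
end

section
/- Let T = R S ∈ ℝ^{m×m} be column-stochastic with R ∈ ℝ^{m×k}, S ∈ ℝ^{k×m}, let O ∈ ℝ^{n×m} be column-stochastic, π = R π_l ∈ ℝ^m a stochastic vector, and U ∈ ℝ^{n×k} with U^T O R invertible. Define b_1 = (U^T O R) π_l, b_∞^T = 1_m^T R (U^T O R)^{-1}, B_x = (U^T O R) W_x (U^T O R)^{-1} with W_x = S diag(O_{x,·}) R, and A_x = R S diag(O_{x,·}). For a sequence x_1,…,x_{t-1} with 1_m^T A_{x_{t-1}} ⋯ A_{x_1} π > 0, define the internal state b_t = B_{x_{t-1}} ⋯ B_{x_1} b_1 / (b_∞^T B_{x_{t-1}} ⋯ B_{x_1} b_1) and the belief h_t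 = A_{x_{t-1}} ⋯ A_{x_1} π / (1_m^T A_{x_{t-1}} ⋯ A_{x_1} π). Then b_t = (U^T O) h_t. -/
open Matrix

/-!
Write `M = Uᵀ O R` and `W_x = S diag(O_x) R`. Both families of operators are intertwined with
the `k`-dimensional operators `W_x`: `A_x R = R W_x` and `B_x M = M W_x`. By
`list_prod_intertwine` the same holds for products along a sequence, so with
`v = W_{x_{t-1}} ⋯ W_{x_1} πₗ` the unnormalized belief is `R v` and the unnormalized internal
state is `M v = Uᵀ O (R v)`. The normalizers agree since `b_∞ᵀ M v = 1ᵀ R M⁻¹ M v = 1ᵀ R v`.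
-/

/-- If `P` intertwines `F x` with `G x` for each `x`, it intertwines the products along a list. -/
lemma list_prod_intertwine {α ι κ : Type*} [Fintype ι] [DecidableEq ι] [Fintype κ]
    [DecidableEq κ] (P : Matrix ι κ ℝ) (F : α → Matrix ι ι ℝ) (G : α → Matrix κ κ ℝ)
    (h : ∀ x, F x * P = P * G x) (xs : List α) :
    (xs.map F).prod * P = P * (xs.map G).prod := by
  induction xs with
  | nil => simp
  | cons x xs ih =>
    simp only [List.map_cons, List.prod_cons]
    rw [Matrix.mul_assoc, ih, ← Matrix.mul_assoc, h, Matrix.mul_assoc]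

/-- For a column-stochastic RR-HMM (`T = R S`, `O` column-stochastic,
`π = R πₗ` stochastic) and `U` with `Uᵀ O R` invertible, whenever the sequence
`x_1, …, x_{t-1}` has positive probability, the normalized internal state
`b_t = B_{x_{t-1}} ⋯ B_{x_1} b₁ / (b_∞ᵀ B_{x_{t-1}} ⋯ B_{x_1} b₁)` equals `(Uᵀ O) h_t`,
where `h_t = A_{x_{t-1}} ⋯ A_{x_1} π / (1ₘᵀ A_{x_{t-1}} ⋯ A_{x_1} π)` is the conditional
hidden-state belief. -/
theorem internal_state_eq_belief {m k n : ℕ}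
    (R : Matrix (Fin m) (Fin k) ℝ) (S : Matrix (Fin k) (Fin m) ℝ)
    (O : Matrix (Fin n) (Fin m) ℝ)
    (π : Fin m → ℝ) (πl : Fin k → ℝ)
    (hTnn : ∀ i j, 0 ≤ (R * S) i j) (hTcol : ∀ j, ∑ i, (R * S) i j = 1)
    (hOnn : ∀ i j, 0 ≤ O i j) (hOcol : ∀ j, ∑ i, O i j = 1)
    (hπ : π = R *ᵥ πl) (hπnn : ∀ i, 0 ≤ π i) (hπsum : ∑ i, π i = 1)
    (U : Matrix (Fin n) (Fin k) ℝ)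
    (hU : IsUnit (Uᵀ * O * R))
    (xs : List (Fin n)) :
    let A : Fin n → Matrix (Fin m) (Fin m) ℝ :=
      fun x => R * S * Matrix.diagonal (fun i => O x i)
    let B : Fin n → Matrix (Fin k) (Fin k) ℝ :=
      fun x => (Uᵀ * O * R) * (S * Matrix.diagonal (fun i => O x i) * R) * (Uᵀ * O * R)⁻¹
    let b1 : Fin k → ℝ := (Uᵀ * O * R) *ᵥ πl
    let binf : Fin k → ℝ := (fun _ => (1 : ℝ)) ᵥ* (R * (Uᵀ * O * R)⁻¹)
    let Ap : Matrix (Fin m) (Fin m) ℝ := (xs.map A).prod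
    let Bp : Matrix (Fin k) (Fin k) ℝ := (xs.map B).prod
    0 < (fun _ => (1 : ℝ)) ⬝ᵥ (Ap *ᵥ π) →
      (binf ⬝ᵥ (Bp *ᵥ b1))⁻¹ • (Bp *ᵥ b1)
        = (Uᵀ * O) *ᵥ (((fun _ => (1 : ℝ)) ⬝ᵥ (Ap *ᵥ π))⁻¹ • (Ap *ᵥ π)) := by
  intro A B b1 binf Ap Bp _
  have hdet : IsUnit (Uᵀ * O * R).det := (Matrix.isUnit_iff_isUnit_det _).mp hU
  let W : Fin n → Matrix (Fin k) (Fin k) ℝ :=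
    fun x => S * Matrix.diagonal (fun i => O x i) * R
  have hA : Ap * R = R * (xs.map W).prod :=
    list_prod_intertwine R A W (fun x => by simp only [A, W, Matrix.mul_assoc]) xs
  have hB : Bp * (Uᵀ * O * R) = (Uᵀ * O * R) * (xs.map W).prod :=
    list_prod_intertwine (Uᵀ * O * R) B W
      (fun x => Matrix.nonsing_inv_mul_cancel_right _ _ hdet) xs
  have hAπ : Ap *ᵥ π = R *ᵥ ((xs.map W).prod *ᵥ πl) := by
    rw [hπ, Matrix.mulVec_mulVec, hA, Matrix.mulVec_mulVec]
  have hBb : Bp *ᵥ b1 = (Uᵀ * O * R) *ᵥ ((xs.map W).prod *ᵥ πl) := by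
    simp only [b1]
    rw [Matrix.mulVec_mulVec, hB, Matrix.mulVec_mulVec]
  have hnorm : binf ⬝ᵥ (Bp *ᵥ b1) = (fun _ => (1 : ℝ)) ⬝ᵥ (Ap *ᵥ π) := by
    rw [hBb, hAπ]
    simp only [binf]
    rw [← Matrix.dotProduct_mulVec, Matrix.mulVec_mulVec,
      Matrix.nonsing_inv_mul_cancel_right _ _ hdet]
  rw [hnorm, Matrix.mulVec_smul, hBb, hAπ, Matrix.mulVec_mulVec _ (Uᵀ * O) R]
end

section
/- Let A ∈ ℝ^{m×n} with m ≥ n have rank k < n, with nonzero singular values σ_1 ≥ … ≥ σ_k > 0 and U ∈ ℝ^{m×k} the matrix of the corresponding left singular vectors. Let Ã = A + E, let Ũ ∈ ℝ^{m×k} be the matrix of left singular vectors of Ã corresponding to its k largest singular values σ̃_1 ≥ … ≥ σ̃_k, and let Ũ_⊥ ∈ ℝ^{m×(m−k)} be the remaining left singular vectors of Ã. If ‖E‖_2 ≤ ε σ_k for some ε < 1, then: (1) σ̃_k ≥ (1 − ε) σ_k, and (2) ‖Ũ_⊥^T U‖_2 ≤ ‖E‖_2 / σ̃_k. -/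
/-!
Write `Ã = A + E`, and `σ̃_k` for its `k`-th singular value.

The first claim is Weyl's inequality `σ_k ≤ σ̃_k + ‖E‖` (`weyl_bound`): by counting dimensions, the
`k`-dimensional column space of `V` contains some `x ≠ 0` orthogonal to the first `k - 1` right
singular vectors of `Ã`, and `σ_k ‖x‖ ≤ ‖A x‖ ≤ ‖Ã x‖ + ‖E x‖ ≤ (σ̃_k + ‖E‖) ‖x‖`.

For the second claim, the sines of the angles between the column spaces of `U` and `Ũ` are first
bounded from the side of `Ũ` (`wedin_residual`): `Ũ y = Ã z` with `z = Ṽ Σ̃⁻¹ y`, so `Ũ y` is within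
`‖E z‖ ≤ (‖E‖ / σ̃_k) ‖y‖` of `A z`, a vector in the column space of `U`. In terms of the square
matrix `W = Ũᵀ U` this says `‖y‖² - ‖Wᵀ y‖² ≤ (‖E‖ / σ̃_k)² ‖y‖²`. Since `W` and `Wᵀ` have the same
smallest singular value (`lower_bound_transpose`), the same bound holds for
`‖x‖² - ‖W x‖² = ‖Ũ_⊥ᵀ U x‖²`.
-/

open Matrix

/-- The spectral norm (largest singular value) of a real matrix. -/
noncomputable def specNorm {p q : ℕ} (A : Matrix (Fin p) (Fin q) ℝ) : ℝ :=
  ‖LinearMap.toContinuousLinearMap (Matrix.toEuclideanLin A)‖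

/-! ### Euclidean lengths and the spectral norm -/

lemma norm_toLp_sq {p : ℕ} (x : Fin p → ℝ) : ‖WithLp.toLp 2 x‖ ^ 2 = x ⬝ᵥ x := by
  rw [EuclideanSpace.norm_sq_eq]
  simp [dotProduct, pow_two]

lemma dotProduct_self_nonneg' {p : ℕ} (x : Fin p → ℝ) : 0 ≤ x ⬝ᵥ x := by
  rw [← norm_toLp_sq]; positivity

lemma specNorm_nonneg {p q : ℕ} (M : Matrix (Fin p) (Fin q) ℝ) : 0 ≤ specNorm M :=
  norm_nonneg _

lemma norm_mulVec_le {p q : ℕ} (M : Matrix (Fin p) (Fin q) ℝ) (x : Fin q → ℝ) :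
    ‖WithLp.toLp 2 (M *ᵥ x)‖ ≤ specNorm M * ‖WithLp.toLp 2 x‖ :=
  (LinearMap.toContinuousLinearMap (Matrix.toEuclideanLin M)).le_opNorm (WithLp.toLp 2 x)

lemma mulVec_dot_le {p q : ℕ} (M : Matrix (Fin p) (Fin q) ℝ) (x : Fin q → ℝ) :
    (M *ᵥ x) ⬝ᵥ (M *ᵥ x) ≤ specNorm M ^ 2 * (x ⬝ᵥ x) := by
  rw [← norm_toLp_sq, ← norm_toLp_sq, ← mul_pow]
  exact pow_le_pow_left₀ (norm_nonneg _) (norm_mulVec_le M x) 2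

lemma specNorm_le {p q : ℕ} (M : Matrix (Fin p) (Fin q) ℝ) (c : ℝ) (hc : 0 ≤ c)
    (h : ∀ x, (M *ᵥ x) ⬝ᵥ (M *ᵥ x) ≤ c ^ 2 * (x ⬝ᵥ x)) : specNorm M ≤ c := by
  refine ContinuousLinearMap.opNorm_le_bound _ hc fun x => ?_
  have hx := h x.ofLp
  rw [← norm_toLp_sq, ← norm_toLp_sq, ← mul_pow] at hx
  exact le_of_sq_le_sq hx (by positivity)

lemma mulVec_dot_mulVec {p q r : ℕ} (M : Matrix (Fin p) (Fin q) ℝ)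
    (N : Matrix (Fin p) (Fin r) ℝ) (x : Fin q → ℝ) (y : Fin r → ℝ) :
    (M *ᵥ x) ⬝ᵥ (N *ᵥ y) = x ⬝ᵥ ((Mᵀ * N) *ᵥ y) := by
  rw [← mulVec_mulVec, dotProduct_mulVec, dotProduct_mulVec,
    dotProduct_mulVec, vecMul_transpose]

lemma dot_of_orth {p q : ℕ} {M : Matrix (Fin p) (Fin q) ℝ} (hM : Mᵀ * M = 1)
    (x : Fin q → ℝ) : (M *ᵥ x) ⬝ᵥ (M *ᵥ x) = x ⬝ᵥ x := by
  rw [mulVec_dot_mulVec, hM, one_mulVec]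

/-! ### Projections and transposes -/

/-- `U Uᵀ b` is the best approximation of `b` in the column space of `U`, with
squared error `‖b‖² - ‖Uᵀ b‖²`. -/
lemma residual_le {p q : ℕ} {U : Matrix (Fin p) (Fin q) ℝ} (hU : Uᵀ * U = 1)
    (b : Fin p → ℝ) (a : Fin q → ℝ) :
    b ⬝ᵥ b - (Uᵀ *ᵥ b) ⬝ᵥ (Uᵀ *ᵥ b) ≤ (b - U *ᵥ a) ⬝ᵥ (b - U *ᵥ a) := by
  have h1 := dotProduct_self_nonneg' (a - Uᵀ *ᵥ b)
  have h2 : (U *ᵥ a) ⬝ᵥ b = a ⬝ᵥ (Uᵀ *ᵥ b) := by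
    simpa using mulVec_dot_mulVec U 1 a b
  have h3 := dot_of_orth hU a
  simp only [dotProduct_sub, sub_dotProduct] at h1 ⊢
  rw [dotProduct_comm b (U *ᵥ a), h2, h3]
  rw [dotProduct_comm (Uᵀ *ᵥ b) a] at h1
  linarith

/-- A square matrix and its transpose have the same smallest singular value. This gives
`‖Ũ_⊥ᵀ U‖ = ‖U_⊥ᵀ Ũ‖` when applied to `W = Ũᵀ U`. -/
lemma lower_bound_transpose {k : ℕ} (W : Matrix (Fin k) (Fin k) ℝ) (s : ℝ)
    (h : ∀ y, y ⬝ᵥ y - (Wᵀ *ᵥ y) ⬝ᵥ (Wᵀ *ᵥ y) ≤ s * (y ⬝ᵥ y)) (x : Fin k → ℝ) :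
    x ⬝ᵥ x - (W *ᵥ x) ⬝ᵥ (W *ᵥ x) ≤ s * (x ⬝ᵥ x) := by
  have hx := dotProduct_self_nonneg' x
  have hWx := dotProduct_self_nonneg' (W *ᵥ x)
  rcases le_or_gt 1 s with hs | hs
  · nlinarith
  -- For `s < 1` the bound makes `Wᵀ` injective, hence surjective.
  have hinj : Function.Injective (Matrix.mulVecLin Wᵀ) := by
    rw [← LinearMap.ker_eq_bot, LinearMap.ker_eq_bot']
    intro y hy
    have hy' : Wᵀ *ᵥ y = 0 := hy
    have h1 := h y
    rw [hy'] at h1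
    simp only [dotProduct_zero, sub_zero] at h1
    have h2 := dotProduct_self_nonneg' y
    exact dotProduct_self_eq_zero.mp (by nlinarith)
  obtain ⟨y, hy⟩ := (LinearMap.injective_iff_surjective.mp hinj) x
  have hy' : Wᵀ *ᵥ y = x := hy
  have h1 := h y
  rw [hy'] at h1
  have h2 : x ⬝ᵥ x = (W *ᵥ x) ⬝ᵥ y := by
    have := mulVec_dot_mulVec W 1 x y
    simp only [Matrix.mul_one, hy', one_mulVec] at this
    exact this.symm
  -- Expanding `‖W x - (1 - s) y‖² ≥ 0` replaces Cauchy–Schwarz.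
  have h3 := dotProduct_self_nonneg' (W *ᵥ x - (1 - s) • y)
  simp only [dotProduct_sub, sub_dotProduct, smul_dotProduct, dotProduct_smul, smul_eq_mul] at h3
  rw [dotProduct_comm y, ← h2] at h3
  nlinarith

/-! ### Zero padding and rectangular diagonal matrices -/

lemma sum_split {m k : ℕ} (hkm : k ≤ m) (f : Fin m → ℝ) :
    ∑ i, f i = ∑ i : Fin k, f (Fin.castLE hkm i)
      + ∑ j : Fin (m - k), f ⟨k + (j : ℕ), by omega⟩ := by
  have e : k + (m - k) = m := by omega
  rw [← (finCongr e).sum_comp f, Fin.sum_univ_add]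
  rfl

/-- Extension of a vector by zeros. -/
def zeroPad {k : ℕ} (m : ℕ) (y : Fin k → ℝ) : Fin m → ℝ :=
  fun i => if h : (i : ℕ) < k then y ⟨i, h⟩ else 0

lemma zeroPad_dot {m k : ℕ} (hkm : k ≤ m) (y : Fin k → ℝ) (f : Fin m → ℝ) :
    f ⬝ᵥ zeroPad m y = ∑ i : Fin k, f (Fin.castLE hkm i) * y i := by
  rw [dotProduct, sum_split hkm]
  simp [zeroPad]

lemma mulVec_zeroPad {p m k : ℕ} (hkm : k ≤ m) (M : Matrix (Fin p) (Fin m) ℝ)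
    (y : Fin k → ℝ) : M *ᵥ zeroPad m y = M.submatrix id (Fin.castLE hkm) *ᵥ y := by
  ext i
  exact zeroPad_dot hkm y (M i)

/-- The `m × n` rectangular diagonal matrix with diagonal `s`. -/
def rectDiag (m : ℕ) {n : ℕ} (s : Fin n → ℝ) : Matrix (Fin m) (Fin n) ℝ :=
  Matrix.of fun (i : Fin m) (j : Fin n) => if (i : ℕ) = (j : ℕ) then s j else 0

lemma rectDiag_mulVec {m n : ℕ} (s x : Fin n → ℝ) :
    rectDiag m s *ᵥ x = zeroPad m (fun j => s j * x j) := by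
  ext i
  simp only [rectDiag, mulVec, dotProduct, of_apply, zeroPad, ite_mul, zero_mul]
  split_ifs with h
  · rw [Finset.sum_eq_single ⟨i, h⟩]
    · simp
    · intro j _ hj
      rw [if_neg]
      rintro hij
      exact hj (Fin.ext hij.symm)
    · simp
  · refine Finset.sum_eq_zero fun j _ => if_neg ?_
    omega

lemma zeroPad_dot_self {m k : ℕ} (hkm : k ≤ m) (y : Fin k → ℝ) :
    zeroPad m y ⬝ᵥ zeroPad m y = y ⬝ᵥ y := by
  rw [zeroPad_dot hkm]
  simp [zeroPad, dotProduct]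

/-! ### The bounds of Weyl and Wedin -/

/-- Weyl's inequality for the `k`-th singular value: the column space of `V` contains a nonzero
vector orthogonal to the first `k - 1` right singular vectors of `A + E`, which `A` stretches by at
least `σ_k` and `A + E` by at most `σ̃_k`. -/
lemma weyl_bound {m n k : ℕ} (hmn : n ≤ m) (hk0 : 0 < k) (hkn : k < n)
    (A E : Matrix (Fin m) (Fin n) ℝ)
    (σ : Fin k → ℝ) (hσpos : ∀ i, 0 < σ i) (hσmono : Antitone σ)
    (U : Matrix (Fin m) (Fin k) ℝ) (V : Matrix (Fin n) (Fin k) ℝ)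
    (hUorth : Uᵀ * U = 1) (hVorth : Vᵀ * V = 1)
    (hA : A = U * Matrix.diagonal σ * Vᵀ)
    (Ub : Matrix (Fin m) (Fin m) ℝ) (Vb : Matrix (Fin n) (Fin n) ℝ)
    (σt : Fin n → ℝ) (hσt_nn : ∀ i, 0 ≤ σt i) (hσt_mono : Antitone σt)
    (hUb : Ubᵀ * Ub = 1) (hVb : Vbᵀ * Vb = 1)
    (hSVD : A + E = Ub * rectDiag m σt * Vbᵀ) :
    σ ⟨k - 1, by omega⟩ ≤ σt ⟨k - 1, by omega⟩ + specNorm E := by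
  set s := σ ⟨k - 1, by omega⟩ with hs
  set t := σt ⟨k - 1, by omega⟩ with ht
  let B : Matrix (Fin (k - 1)) (Fin k) ℝ :=
    (Vbᵀ * V).submatrix (Fin.castLE (by omega)) id
  have hker : LinearMap.ker B.mulVecLin ≠ ⊥ := by
    apply LinearMap.ker_ne_bot_of_finrank_lt
    simp
    omega
  obtain ⟨a, ha, ha0⟩ := Submodule.exists_mem_ne_zero_of_ne_bot hker
  have ha' : B *ᵥ a = 0 := ha
  have hq : ∀ j : Fin n, (j : ℕ) < k - 1 → ((Vbᵀ * V) *ᵥ a) j = 0 := fun j hj =>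
    congrFun ha' ⟨j, hj⟩
  have hVb' : Vbᵀᵀ * Vbᵀ = 1 := by
    rw [transpose_transpose]; exact mul_eq_one_comm.mp hVb
  have hqq : ((Vbᵀ * V) *ᵥ a) ⬝ᵥ ((Vbᵀ * V) *ᵥ a) = a ⬝ᵥ a := by
    rw [← mulVec_mulVec, dot_of_orth hVb', dot_of_orth hVorth]
  have hx : (V *ᵥ a) ⬝ᵥ (V *ᵥ a) = a ⬝ᵥ a := dot_of_orth hVorth a
  have hAx : s ^ 2 * (a ⬝ᵥ a) ≤ (A *ᵥ (V *ᵥ a)) ⬝ᵥ (A *ᵥ (V *ᵥ a)) := by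
    rw [hA, mulVec_mulVec, Matrix.mul_assoc, hVorth, Matrix.mul_one, ← mulVec_mulVec,
      dot_of_orth hUorth]
    simp only [dotProduct, mulVec_diagonal, Finset.mul_sum]
    refine Finset.sum_le_sum fun i _ => ?_
    have h1 : s ≤ σ i := hσmono (Fin.le_def.mpr (by simp; omega))
    have h2 : s ^ 2 ≤ σ i ^ 2 := pow_le_pow_left₀ (hσpos _).le h1 2
    nlinarith [mul_self_nonneg (a i)]
  have hAEx : ((A + E) *ᵥ (V *ᵥ a)) ⬝ᵥ ((A + E) *ᵥ (V *ᵥ a)) ≤ t ^ 2 * (a ⬝ᵥ a) := by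
    rw [hSVD, mulVec_mulVec, Matrix.mul_assoc, Matrix.mul_assoc, ← mulVec_mulVec,
      dot_of_orth hUb, ← mulVec_mulVec, rectDiag_mulVec, zeroPad_dot_self hmn, ← hqq]
    simp only [dotProduct, Finset.mul_sum]
    refine Finset.sum_le_sum fun j _ => ?_
    by_cases hj : (j : ℕ) < k - 1
    · rw [hq j hj]; simp
    · have h1 : σt j ≤ t := hσt_mono (Fin.le_def.mpr (by simp; omega))
      have h2 : σt j ^ 2 ≤ t ^ 2 := pow_le_pow_left₀ (hσt_nn _) h1 2
      nlinarith [mul_self_nonneg (((Vbᵀ * V) *ᵥ a) j)]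
  have hs0 : 0 ≤ s := (hσpos _).le
  have ht0 : 0 ≤ t := hσt_nn _
  have hE := norm_mulVec_le E (V *ᵥ a)
  rw [← norm_toLp_sq, ← norm_toLp_sq, ← mul_pow] at hAx hAEx
  have hAx' := le_of_sq_le_sq hAx (norm_nonneg _)
  have hAEx' := le_of_sq_le_sq hAEx (by positivity)
  rw [← norm_toLp_sq, ← norm_toLp_sq] at hx
  have hx' : ‖WithLp.toLp 2 (V *ᵥ a)‖ = ‖WithLp.toLp 2 a‖ :=
    (sq_eq_sq₀ (norm_nonneg _) (norm_nonneg _)).mp hx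
  have htri : ‖WithLp.toLp 2 (A *ᵥ (V *ᵥ a))‖ ≤
      ‖WithLp.toLp 2 ((A + E) *ᵥ (V *ᵥ a))‖ + ‖WithLp.toLp 2 (E *ᵥ (V *ᵥ a))‖ := by
    have : WithLp.toLp 2 (A *ᵥ (V *ᵥ a)) =
        WithLp.toLp 2 ((A + E) *ᵥ (V *ᵥ a)) - WithLp.toLp 2 (E *ᵥ (V *ᵥ a)) := by
      rw [← WithLp.toLp_sub, add_mulVec, add_sub_cancel_right]
    rw [this]
    exact norm_sub_le _ _
  have hapos : 0 < ‖WithLp.toLp 2 a‖ := by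
    rw [norm_pos_iff]
    simpa using ha0
  rw [hx'] at hE
  exact le_of_mul_le_mul_right (by linarith) hapos

/-- Wedin's bound for the residual of `Ũ y` off the column space of `U`: with
`z = Ṽ Σ̃⁻¹ y`, `Ũ y = (A + E) z` differs from `A z ∈ range U` by `E z`. -/
lemma wedin_residual {m n k : ℕ} (hmn : n ≤ m) (hk0 : 0 < k) (hkn : k < n)
    (A E : Matrix (Fin m) (Fin n) ℝ) (σ : Fin k → ℝ)
    (U : Matrix (Fin m) (Fin k) ℝ) (V : Matrix (Fin n) (Fin k) ℝ)
    (hUorth : Uᵀ * U = 1)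
    (hA : A = U * Matrix.diagonal σ * Vᵀ)
    (Ub : Matrix (Fin m) (Fin m) ℝ) (Vb : Matrix (Fin n) (Fin n) ℝ)
    (σt : Fin n → ℝ) (hσt_mono : Antitone σt)
    (hUb : Ubᵀ * Ub = 1) (hVb : Vbᵀ * Vb = 1)
    (hSVD : A + E = Ub * rectDiag m σt * Vbᵀ)
    (ht : 0 < σt ⟨k - 1, by omega⟩) (y : Fin k → ℝ) :
    y ⬝ᵥ y - ((Uᵀ * Ub.submatrix id (Fin.castLE (by omega))) *ᵥ y) ⬝ᵥ
        ((Uᵀ * Ub.submatrix id (Fin.castLE (by omega))) *ᵥ y) ≤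
      (specNorm E / σt ⟨k - 1, by omega⟩) ^ 2 * (y ⬝ᵥ y) := by
  have hkm : k ≤ m := by omega
  set t := σt ⟨k - 1, by omega⟩ with ht'
  have hle : ∀ i : Fin k, t ≤ σt (Fin.castLE hkn.le i) := fun i =>
    hσt_mono (Fin.le_def.mpr (by simp; omega))
  let w : Fin k → ℝ := fun i => y i / σt (Fin.castLE hkn.le i)
  let z : Fin n → ℝ := Vb *ᵥ zeroPad n w
  have hz : (A + E) *ᵥ z = Ub.submatrix id (Fin.castLE hkm) *ᵥ y := by
    rw [hSVD, mulVec_mulVec, Matrix.mul_assoc, hVb, Matrix.mul_one, ← mulVec_mulVec,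
      rectDiag_mulVec, ← mulVec_zeroPad]
    congr 1
    ext i
    by_cases hi : (i : ℕ) < k
    · have hin : (i : ℕ) < n := by omega
      have h1 : 0 < σt ⟨i, hin⟩ := ht.trans_le (hle ⟨i, hi⟩)
      simp only [zeroPad, hi, hin, dif_pos, w, Fin.castLE_mk]
      field_simp
    · simp [zeroPad, hi]
  have hzz : z ⬝ᵥ z ≤ (y ⬝ᵥ y) / t ^ 2 := by
    rw [dot_of_orth hVb, zeroPad_dot_self hkn.le]
    simp only [dotProduct, Finset.sum_div]
    refine Finset.sum_le_sum fun i _ => ?_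
    have h1 := hle i
    have h2 : t ^ 2 ≤ σt (Fin.castLE hkn.le i) ^ 2 := pow_le_pow_left₀ ht.le h1 2
    have h3 : w i * w i = y i * y i / σt (Fin.castLE hkn.le i) ^ 2 := by
      simp only [w]; rw [div_mul_div_comm, pow_two]
    rw [h3]
    exact div_le_div_of_nonneg_left (mul_self_nonneg _) (by positivity) h2
  have hbb : (Ub.submatrix id (Fin.castLE hkm) *ᵥ y) ⬝ᵥ
      (Ub.submatrix id (Fin.castLE hkm) *ᵥ y) = y ⬝ᵥ y := by
    rw [← mulVec_zeroPad, dot_of_orth hUb, zeroPad_dot_self hkm]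
  have hres := residual_le hUorth (Ub.submatrix id (Fin.castLE hkm) *ᵥ y)
    ((Matrix.diagonal σ * Vᵀ) *ᵥ z)
  have hdiff : Ub.submatrix id (Fin.castLE hkm) *ᵥ y - U *ᵥ ((Matrix.diagonal σ * Vᵀ) *ᵥ z)
      = E *ᵥ z := by
    rw [← hz, add_mulVec, mulVec_mulVec z U, ← Matrix.mul_assoc, ← hA, add_sub_cancel_left]
  rw [hdiff, hbb, mulVec_mulVec] at hres
  calc _ ≤ _ := hres
    _ ≤ specNorm E ^ 2 * (z ⬝ᵥ z) := mulVec_dot_le E z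
    _ ≤ specNorm E ^ 2 * ((y ⬝ᵥ y) / t ^ 2) := by gcongr
    _ = _ := by ring

/-- (Weyl + Wedin perturbation bounds.) Let `A ∈ ℝ^{m×n}` (`m ≥ n`) have
rank `k < n` with nonzero singular values `σ₁ ≥ … ≥ σ_k > 0` and left singular vectors `U`.
Let `Ã = A + E` with full SVD `Ã = Ū D(σ̃) V̄ᵀ` (`σ̃₁ ≥ … ≥ σ̃_n ≥ 0`), `Ũ` the first `k`
columns of `Ū` and `Ũ_⊥` the remaining ones. If `‖E‖₂ ≤ ε σ_k` with `ε < 1`, then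
`σ̃_k ≥ (1 − ε) σ_k` and `‖Ũ_⊥ᵀ U‖₂ ≤ ‖E‖₂ / σ̃_k`. -/
theorem svd_perturbation {m n k : ℕ} (hmn : n ≤ m) (hk0 : 0 < k) (hkn : k < n)
    (A E : Matrix (Fin m) (Fin n) ℝ)
    (hrank : A.rank = k)
    (σ : Fin k → ℝ) (hσpos : ∀ i, 0 < σ i) (hσmono : Antitone σ)
    (U : Matrix (Fin m) (Fin k) ℝ) (V : Matrix (Fin n) (Fin k) ℝ)
    (hUorth : Uᵀ * U = 1) (hVorth : Vᵀ * V = 1)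
    (hA : A = U * Matrix.diagonal σ * Vᵀ)
    (Ub : Matrix (Fin m) (Fin m) ℝ) (Vb : Matrix (Fin n) (Fin n) ℝ)
    (σt : Fin n → ℝ) (hσt_nn : ∀ i, 0 ≤ σt i) (hσt_mono : Antitone σt)
    (hUb : Ubᵀ * Ub = 1) (hVb : Vbᵀ * Vb = 1)
    (hSVD : A + E = Ub * (Matrix.of fun (i : Fin m) (j : Fin n) => if (i : ℕ) = (j : ℕ) then σt j else 0) * Vbᵀ)
    (ε : ℝ) (hε1 : ε < 1)
    (hE : specNorm E ≤ ε * σ ⟨k - 1, by omega⟩) :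
    let Ut : Matrix (Fin m) (Fin k) ℝ := Ub.submatrix id (Fin.castLE (by omega))
    let Utperp : Matrix (Fin m) (Fin (m - k)) ℝ :=
      Ub.submatrix id (fun j => ⟨k + (j : ℕ), by omega⟩)
    (1 - ε) * σ ⟨k - 1, by omega⟩ ≤ σt ⟨k - 1, by omega⟩
      ∧ specNorm (Utperpᵀ * U) ≤ specNorm E / σt ⟨k - 1, by omega⟩ := by
  intro Ut Utperp
  have hkm : k ≤ m := by omega
  have hweyl := weyl_bound hmn hk0 hkn A E σ hσpos hσmono U V hUorth hVorth hA Ub Vb σt hσt_nn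
    hσt_mono hUb hVb hSVD
  have h1 : (1 - ε) * σ ⟨k - 1, by omega⟩ ≤ σt ⟨k - 1, by omega⟩ := by linarith
  have ht : 0 < σt ⟨k - 1, by omega⟩ :=
    (mul_pos (by linarith) (hσpos _)).trans_le h1
  refine ⟨h1, specNorm_le _ _ (div_nonneg (specNorm_nonneg E) ht.le) fun x => ?_⟩
  have hsym := lower_bound_transpose (Utᵀ * U) ((specNorm E / σt ⟨k - 1, by omega⟩) ^ 2)
    (fun y => by
      rw [transpose_mul, transpose_transpose]
      exact wedin_residual hmn hk0 hkn A E σ U V hUorth hA Ub Vb σt hσt_mono hUb hVb hSVD ht y) x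
  have hUb' : Ubᵀᵀ * Ubᵀ = 1 := by
    rw [transpose_transpose]; exact mul_eq_one_comm.mp hUb
  -- Pythagoras: `‖x‖² = ‖Ubᵀ U x‖² = ‖Ũᵀ U x‖² + ‖Ũ_⊥ᵀ U x‖²`.
  have hpyth : x ⬝ᵥ x = ((Utᵀ * U) *ᵥ x) ⬝ᵥ ((Utᵀ * U) *ᵥ x)
      + ((Utperpᵀ * U) *ᵥ x) ⬝ᵥ ((Utperpᵀ * U) *ᵥ x) := by
    rw [← dot_of_orth hUorth x, ← dot_of_orth hUb' (U *ᵥ x), dotProduct, sum_split hkm,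
      ← mulVec_mulVec, ← mulVec_mulVec]
    rfl
  linarith
end
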